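/- (Top-2 reduction of the curvature gap.) Let a = p_y, b = p_{y*} with y* ≠ y, S = a + b, τ = 1 − S, and ū = a/S, and define the curvature gap Δ_{y*,y} = (H_z g)_{y*} − (H_z g)_y. Then Δ_{y*,y} = 4ū(1 − ū)² + ζ with |ζ| ≤ 6τ. -/

import Mathlib

/-- The softmax map `ℝ^V → ℝ^V`. -/
noncomputable def softmax {V : ℕ} (z : Fin V → ℝ) : Fin V → ℝ :=
  fun i => Real.exp (z i) / ∑ j, Real.exp (z j)

/-- The one-hot vector of a class index `y`. -/
noncomputable def oneHot {V : ℕ} (y : Fin V) : Fin V → ℝ := Pi.single y 1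

/-- The softmax logit Hessian `H_z = diag(p) − p pᵀ`. -/
noncomputable def logitHess {V : ℕ} (p : Fin V → ℝ) : Matrix (Fin V) (Fin V) ℝ :=
  Matrix.diagonal p - Matrix.vecMulVec p p

theorem softmax_pos {V : ℕ} (z : Fin V → ℝ) (i : Fin V) : 0 < softmax z i :=
  div_pos (Real.exp_pos _) (Finset.sum_pos (fun _ _ => Real.exp_pos _) ⟨i, Finset.mem_univ i⟩)

theorem sum_softmax {V : ℕ} (z : Fin V → ℝ) (i : Fin V) : ∑ j, softmax z j = 1 := by
  have h : 0 < ∑ j, Real.exp (z j) :=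
    Finset.sum_pos (fun _ _ => Real.exp_pos _) ⟨i, Finset.mem_univ i⟩
  simp only [softmax]
  rw [← Finset.sum_div, div_self h.ne']

theorem logitHess_mulVec_apply {V : ℕ} (p g : Fin V → ℝ) (i : Fin V) :
    (logitHess p).mulVec g i = p i * (g i - ∑ j, p j * g j) := by
  rw [logitHess, Matrix.sub_mulVec, Pi.sub_apply, Matrix.mulVec_diagonal,
    Matrix.vecMulVec_mulVec, mul_sub]
  simp [dotProduct]

theorem sum_mul_sub_oneHot {V : ℕ} (p : Fin V → ℝ) (y : Fin V) :
    ∑ j, p j * (p - oneHot y) j = ∑ j, p j ^ 2 - p y := by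
  simp [oneHot, Pi.single_apply, mul_sub, Finset.sum_sub_distrib, sq]

/-- The sum of squares of a nonnegative vector, after removing two entries, is at most the square
of the remaining mass. -/
theorem exists_sum_sq_eq_add {ι : Type*} [Fintype ι] [DecidableEq ι] (p : ι → ℝ)
    (hp : ∀ i, 0 ≤ p i) {i k : ι} (hik : k ≠ i) :
    ∃ r, ∑ j, p j ^ 2 = p i ^ 2 + p k ^ 2 + r ∧ 0 ≤ r ∧
      r ≤ (∑ j, p j - (p i + p k)) ^ 2 := by
  have split (f : ι → ℝ) :
      ∑ j, f j = f i + f k + ∑ j ∈ (Finset.univ.erase i).erase k, f j := by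
    rw [← Finset.add_sum_erase Finset.univ f (Finset.mem_univ i),
      ← Finset.add_sum_erase (Finset.univ.erase i) f (Finset.mem_erase.2 ⟨hik, Finset.mem_univ k⟩),
      add_assoc]
  refine ⟨_, split _, Finset.sum_nonneg fun _ _ => sq_nonneg _, ?_⟩
  rw [split p, add_sub_cancel_left]
  exact Finset.sum_sq_le_sq_sum_of_nonneg fun j _ => hp j

/-- The deviation of the curvature gap from its two-class value, in terms of the top-2 mass `S`,
the normalized weight `u` and the tail sum of squares `r`. -/
theorem abs_curvature_remainder_le {S u r : ℝ} (hS0 : 0 ≤ S) (hS1 : S ≤ 1) (hu0 : 0 ≤ u)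
    (hu1 : u ≤ 1) (hr0 : 0 ≤ r) (hr : r ≤ (1 - S) ^ 2) :
    |(1 - S) * ((2 * u - 1) * ((1 + u) * (1 + S) - (u ^ 2 + (1 - u) ^ 2) * (1 + S + S ^ 2)) - u)
      + (2 * u - 1) * (S * r)| ≤ 6 * (1 - S) := by
  have hd : |2 * u - 1| ≤ 1 := abs_le.2 ⟨by linarith, by linarith⟩
  have hK : |(1 + u) * (1 + S) - (u ^ 2 + (1 - u) ^ 2) * (1 + S + S ^ 2)| ≤ 4 := by
    have hq0 : 0 ≤ u ^ 2 + (1 - u) ^ 2 := by positivity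
    have hq1 : u ^ 2 + (1 - u) ^ 2 ≤ 1 := by nlinarith
    have hS2 : 1 + S + S ^ 2 ≤ 3 := by nlinarith
    have hm1 : (u ^ 2 + (1 - u) ^ 2) * (1 + S + S ^ 2) ≤ 1 * 3 := by gcongr
    have hm0 : 0 ≤ (u ^ 2 + (1 - u) ^ 2) * (1 + S + S ^ 2) := by positivity
    have hn0 : 0 ≤ (1 + u) * (1 + S) := by positivity
    have hn1 : (1 + u) * (1 + S) ≤ (1 + 1) * (1 + 1) := by gcongr
    exact abs_le.2 ⟨by linarith, by linarith⟩
  have hdK := mul_le_mul hd hK (abs_nonneg _) zero_le_one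
  rw [← abs_mul] at hdK
  have hlin := abs_sub
    ((2 * u - 1) * ((1 + u) * (1 + S) - (u ^ 2 + (1 - u) ^ 2) * (1 + S + S ^ 2))) u
  rw [abs_of_nonneg hu0] at hlin
  have hSr : S * r ≤ 1 - S := by nlinarith
  have hdr := mul_le_mul hd hSr (by positivity) zero_le_one
  have hτ : 0 ≤ 1 - S := by linarith
  refine (abs_add_le _ _).trans ?_
  rw [abs_mul, abs_mul (2 * u - 1) (S * r), abs_of_nonneg hτ, abs_of_nonneg (mul_nonneg hS0 hr0)]
  nlinarith [mul_le_mul_of_nonneg_left (hlin.trans (add_le_add hdK hu1)) hτ]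

/-- Top-2 reduction of the curvature gap. Let `p = softmax(z)`,
`g = p − y` (one-hot `y`), `H_z = diag(p) − p pᵀ`, and `y* ≠ y`. With `a = p_y`,
`b = p_{y*}`, `S = a + b`, `τ = 1 − S`, `ū = a/S`, the curvature gap
`Δ_{y*,y} = (H_z g)_{y*} − (H_z g)_y` satisfies `Δ_{y*,y} = 4ū(1 − ū)² + ζ` with
`|ζ| ≤ 6τ`. -/
theorem statement16 (V : ℕ) (hV : 2 ≤ V) (z : Fin V → ℝ) (y ystar : Fin V)
    (hne : ystar ≠ y) :
    ∃ ζ : ℝ,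
      (logitHess (softmax z)).mulVec (softmax z - oneHot y) ystar
          - (logitHess (softmax z)).mulVec (softmax z - oneHot y) y
        = 4 * (softmax z y / (softmax z y + softmax z ystar))
            * (1 - softmax z y / (softmax z y + softmax z ystar)) ^ 2 + ζ ∧
      |ζ| ≤ 6 * (1 - (softmax z y + softmax z ystar)) := by
  have ha := softmax_pos z y
  have hb := softmax_pos z ystar
  obtain ⟨r, hsum, hr0, hr⟩ := exists_sum_sq_eq_add (softmax z) (fun i => (softmax_pos z i).le) hne
  rw [sum_softmax z y] at hr
  have hS1 : softmax z y + softmax z ystar ≤ 1 := by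
    rw [← sum_softmax z y, ← Finset.sum_pair hne.symm]
    exact Finset.sum_le_sum_of_subset_of_nonneg (Finset.subset_univ _)
      fun i _ _ => (softmax_pos z i).le
  have hgy : (softmax z - oneHot y) y = softmax z y - 1 := by simp [oneHot]
  have hgs : (softmax z - oneHot y) ystar = softmax z ystar := by simp [oneHot, hne]
  rw [logitHess_mulVec_apply, logitHess_mulVec_apply, sum_mul_sub_oneHot, hsum, hgy, hgs]
  generalize softmax z y = a at *
  generalize softmax z ystar = b at *
  have hS : 0 < a + b := add_pos ha hb
  refine ⟨_, ?_, abs_curvature_remainder_le (u := a / (a + b)) hS.le hS1 (by positivity)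
    ((div_le_one hS).2 (by linarith)) hr0 hr⟩
  field_simp
  ring
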